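/- Let A be a partial H-module algebra. An H-stable ideal 𝔭 ⊊ A is H-prime if and only if A∖𝔭 is an Hm-system. -/

import Mathlib

/-!
Write `H·x` for the span of the elements `h·x`. The axioms of a partial action give
`h·(ab) ∈ (H·a)(H·b)` and `h·(g·x) ∈ (H·1)(H·x)`, so `A(H·x)` is `H`-stable even though `H·x` need
not be, and `⟨x⟩ = A(H·x)A` is the smallest `H`-stable ideal containing `x`. Since
`⟨x⟩⟨y⟩ = A(H·x)A(H·y)A`, an ideal contains `⟨x⟩⟨y⟩` if and only if it contains `A(H·x)A(H·y)`.
Hence `H`-primeness, tested on the ideals `⟨x⟩` and `⟨y⟩`, says that `A(H·x)A(H·y) ⊆ 𝔭` forces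
`x ∈ 𝔭` or `y ∈ 𝔭`.
-/

open TensorProduct

noncomputable section

variable (k : Type*) [Field k]

/-- The "Sweedler sum" `h ↦ Σ f(h₁) * g(h₂)`. -/
def sweedler {H A : Type*} [Ring H] [HopfAlgebra k H]
    [Ring A] [Algebra k A] (f g : H →ₗ[k] A) : H →ₗ[k] A :=
  (LinearMap.mul' k A) ∘ₗ (TensorProduct.map f g) ∘ₗ Coalgebra.comul

/-- A (left) partial `H`-module algebra structure on a unital algebra `A`:
`1_H · a = a`, `h · (ab) = Σ (h₁·a)(h₂·b)` and `h·(g·b) = Σ (h₁·1)((h₂ g)·b)`. -/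
structure PartialModuleAlgebra (H A : Type*) [Ring H] [HopfAlgebra k H]
    [Ring A] [Algebra k A] where
  act : H →ₗ[k] A →ₗ[k] A
  one_act : ∀ a : A, act 1 a = a
  act_mul : ∀ (h : H) (a b : A),
    act h (a * b) = sweedler k (act.flip a) (act.flip b) h
  act_act : ∀ (h g : H) (b : A),
    act h (act g b) =
      sweedler k (act.flip 1) ((act.flip b) ∘ₗ LinearMap.mulRight k g) h

variable {H A : Type*} [Ring H] [HopfAlgebra k H] [Ring A] [Algebra k A]

/-- A (two-sided) ideal of `A`, encoded as a `k`-submodule closed under multiplication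
by elements of `A` on both sides. -/
def IsIdeal (I : Submodule k A) : Prop :=
  ∀ a ∈ I, ∀ b : A, a * b ∈ I ∧ b * a ∈ I

/-- An `H`-stable subspace: `H · I ⊆ I`. -/
def Hstable (ξ : PartialModuleAlgebra k H A) (I : Submodule k A) : Prop :=
  ∀ (h : H), ∀ x ∈ I, ξ.act h x ∈ I

/-- `(I : H) = {x ∈ I | h · x ∈ I for all h ∈ H}`. -/
def colonH (ξ : PartialModuleAlgebra k H A) (I : Submodule k A) : Submodule k A :=
  I ⊓ ⨅ h : H, Submodule.comap (ξ.act h) I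

/-- The product of two ideals of `A`. -/
def idealProd (I J : Submodule k A) : Submodule k A :=
  Submodule.span k {z | ∃ a ∈ I, ∃ b ∈ J, z = a * b}

/-- An `H`-prime ideal: a proper `H`-stable ideal `𝔭` such that for all `H`-stable ideals
`I, J`, `IJ ⊆ 𝔭` implies `I ⊆ 𝔭` or `J ⊆ 𝔭`. -/
def IsHPrime (ξ : PartialModuleAlgebra k H A) (p : Submodule k A) : Prop :=
  IsIdeal k p ∧ Hstable k ξ p ∧ p ≠ ⊤ ∧
    ∀ I J : Submodule k A, IsIdeal k I → Hstable k ξ I → IsIdeal k J → Hstable k ξ J →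
      idealProd k I J ≤ p → I ≤ p ∨ J ≤ p

/-- An `H`-semiprime ideal: a proper `H`-stable ideal `𝔰` such that `I² ⊆ 𝔰` implies
`I ⊆ 𝔰` for every `H`-stable ideal `I`. -/
def IsHSemiprime (ξ : PartialModuleAlgebra k H A) (s : Submodule k A) : Prop :=
  IsIdeal k s ∧ Hstable k ξ s ∧ s ≠ ⊤ ∧
    ∀ I : Submodule k A, IsIdeal k I → Hstable k ξ I → idealProd k I I ≤ s → I ≤ s

/-- The subspace `A(H·x)A(H·y)`, spanned by the products `a (h·x) b (g·y)`. -/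
def spanAxAy (ξ : PartialModuleAlgebra k H A) (x y : A) : Submodule k A :=
  Submodule.span k {w | ∃ (a : A) (h : H) (b : A) (g : H), w = a * ξ.act h x * b * ξ.act g y}

/-- An `Hm`-system: a nonempty `M ⊆ A` such that `A(H·x)A(H·y) ∩ M ≠ ∅` for `x, y ∈ M`. -/
def HmSystem (ξ : PartialModuleAlgebra k H A) (M : Set A) : Prop :=
  M.Nonempty ∧ ∀ x ∈ M, ∀ y ∈ M, ∃ z ∈ M, z ∈ spanAxAy k ξ x y

/-- An `Hn`-system: a nonempty `N ⊆ A` such that `A(H·x)A(H·x) ∩ N ≠ ∅` for `x ∈ N`. -/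
def HnSystem (ξ : PartialModuleAlgebra k H A) (N : Set A) : Prop :=
  N.Nonempty ∧ ∀ x ∈ N, ∃ z ∈ N, z ∈ spanAxAy k ξ x x

/-- The `H`-radical `√_H(I)` of an `H`-stable ideal `I`:
`{x | every Hm-system containing x meets I}`. -/
def Hradical (ξ : PartialModuleAlgebra k H A) (I : Submodule k A) : Set A :=
  {x : A | ∀ M : Set A, HmSystem k ξ M → x ∈ M → (M ∩ (I : Set A)).Nonempty}

section

variable {k}

theorem sweedler_mem_range_mul_range (f g : H →ₗ[k] A) (h : H) :
    sweedler k f g h ∈ LinearMap.range f * LinearMap.range g := by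
  suffices ∀ t : H ⊗[k] H,
      LinearMap.mul' k A (TensorProduct.map f g t) ∈ LinearMap.range f * LinearMap.range g from
    this (Coalgebra.comul h)
  intro t
  induction t with
  | zero => simp
  | tmul u v =>
    exact Submodule.mul_mem_mul (LinearMap.mem_range_self f u) (LinearMap.mem_range_self g v)
  | add s t hs ht => simpa only [map_add] using add_mem hs ht

theorem idealProd_eq_mul (I J : Submodule k A) : idealProd k I J = I * J := by
  refine le_antisymm (Submodule.span_le.2 ?_) (Submodule.mul_le.2 fun a ha b hb ↦ ?_)
  · rintro _ ⟨a, ha, b, hb, rfl⟩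
    exact Submodule.mul_mem_mul ha hb
  · exact Submodule.subset_span ⟨a, ha, b, hb, rfl⟩

theorem isIdeal_iff_mul_top_le_and_top_mul_le {I : Submodule k A} :
    IsIdeal k I ↔ I * ⊤ ≤ I ∧ ⊤ * I ≤ I := by
  simp only [IsIdeal, Submodule.mul_le, Submodule.mem_top, true_imp_iff]
  exact ⟨fun h ↦ ⟨fun a ha b ↦ (h a ha b).1, fun b a ha ↦ (h a ha b).2⟩,
    fun h a ha b ↦ ⟨h.1 a ha b, h.2 b a ha⟩⟩

theorem isIdeal_top_mul_mul_top (I : Submodule k A) : IsIdeal k (⊤ * I * ⊤) := by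
  refine isIdeal_iff_mul_top_le_and_top_mul_le.2 ⟨?_, ?_⟩
  · rw [mul_assoc]
    gcongr
    exact le_top
  · simp only [← mul_assoc]
    gcongr
    exact le_top

theorem IsIdeal.top_mul_mul_top_le {I J : Submodule k A} (hI : IsIdeal k I) (hJI : J ≤ I) :
    ⊤ * J * ⊤ ≤ I := by
  obtain ⟨mul_top_le, top_mul_le⟩ := isIdeal_iff_mul_top_le_and_top_mul_le.1 hI
  calc
    ⊤ * J * ⊤ ≤ ⊤ * I * ⊤ := by gcongr
    _ ≤ I * ⊤ := by gcongr
    _ ≤ I := mul_top_le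

variable (ξ : PartialModuleAlgebra k H A)

namespace PartialModuleAlgebra

/-- The subspace `H·x` of all `h·x`, encoded as a range so that Sweedler sums, such as
`h·(ab) = Σ (h₁·a)(h₂·b)`, lie in products of such subspaces. -/
def orbit (x : A) : Submodule k A :=
  LinearMap.range (ξ.act.flip x)

theorem mem_orbit_self (x : A) : x ∈ ξ.orbit x :=
  ⟨1, ξ.one_act x⟩

theorem act_mul_mem (h : H) (a b : A) : ξ.act h (a * b) ∈ ξ.orbit a * ξ.orbit b := by
  rw [ξ.act_mul]
  exact sweedler_mem_range_mul_range _ _ h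

theorem orbit_act_le (g : H) (x : A) : ξ.orbit (ξ.act g x) ≤ ξ.orbit 1 * ξ.orbit x := by
  rintro _ ⟨h, rfl⟩
  rw [LinearMap.flip_apply, ξ.act_act]
  exact mul_le_mul' le_rfl (LinearMap.range_comp_le_range _ _)
    (sweedler_mem_range_mul_range _ _ h)

end PartialModuleAlgebra

variable {ξ}

theorem Hstable.orbit_le {I : Submodule k A} (hI : Hstable k ξ I) {x : A} (hx : x ∈ I) :
    ξ.orbit x ≤ I := by
  rintro _ ⟨h, rfl⟩
  exact hI h x hx

theorem hstable_top : Hstable k ξ ⊤ :=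
  fun _ _ _ ↦ Submodule.mem_top

theorem hstable_mul_iff {I J : Submodule k A} :
    Hstable k ξ (I * J) ↔ ∀ a ∈ I, ∀ b ∈ J, ∀ h, ξ.act h (a * b) ∈ I * J := by
  refine ⟨fun hIJ a ha b hb h ↦ hIJ h _ (Submodule.mul_mem_mul ha hb), fun hIJ h ↦ ?_⟩
  have : I * J ≤ (I * J).comap (ξ.act h) := Submodule.mul_le.2 fun a ha b hb ↦ hIJ a ha b hb h
  exact this

theorem Hstable.mul {I J : Submodule k A} (hI : Hstable k ξ I) (hJ : Hstable k ξ J) :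
    Hstable k ξ (I * J) :=
  hstable_mul_iff.2 fun a ha b hb h ↦
    mul_le_mul' (hI.orbit_le ha) (hJ.orbit_le hb) (ξ.act_mul_mem h a b)

namespace PartialModuleAlgebra

variable (ξ)

theorem hstable_top_mul_orbit (x : A) : Hstable k ξ (⊤ * ξ.orbit x) := by
  refine hstable_mul_iff.2 ?_
  rintro a - _ ⟨g, rfl⟩ h
  suffices ξ.orbit a * ξ.orbit (ξ.act g x) ≤ ⊤ * ξ.orbit x from this (ξ.act_mul_mem h a _)
  calc
    ξ.orbit a * ξ.orbit (ξ.act g x) ≤ ξ.orbit a * (ξ.orbit 1 * ξ.orbit x) := by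
      gcongr
      exact ξ.orbit_act_le g x
    _ = ξ.orbit a * ξ.orbit 1 * ξ.orbit x := (mul_assoc ..).symm
    _ ≤ ⊤ * ξ.orbit x := by
      gcongr
      exact le_top

/-- The smallest `H`-stable ideal containing `x`, encoded as the product `A(H·x)A`. -/
def stableIdealSpan (x : A) : Submodule k A :=
  ⊤ * ξ.orbit x * ⊤

theorem hstable_stableIdealSpan (x : A) : Hstable k ξ (ξ.stableIdealSpan x) :=
  (ξ.hstable_top_mul_orbit x).mul hstable_top

theorem isIdeal_stableIdealSpan (x : A) : IsIdeal k (ξ.stableIdealSpan x) :=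
  isIdeal_top_mul_mul_top (ξ.orbit x)

theorem mem_stableIdealSpan_self (x : A) : x ∈ ξ.stableIdealSpan x := by
  simpa only [stableIdealSpan, one_mul, mul_one] using
    Submodule.mul_mem_mul (Submodule.mul_mem_mul (Submodule.mem_top (x := 1)) (ξ.mem_orbit_self x))
      (Submodule.mem_top (x := 1))

variable {ξ} in
theorem stableIdealSpan_le {I : Submodule k A} (hI : IsIdeal k I) (hIs : Hstable k ξ I) {x : A}
    (hx : x ∈ I) : ξ.stableIdealSpan x ≤ I :=
  hI.top_mul_mul_top_le (hIs.orbit_le hx)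

open scoped Pointwise in
theorem spanAxAy_eq_stableIdealSpan_mul_orbit (x y : A) :
    spanAxAy k ξ x y = ξ.stableIdealSpan x * ξ.orbit y :=
  calc
    spanAxAy k ξ x y
      = Submodule.span k (Set.univ * (ξ.orbit x : Set A) * Set.univ * (ξ.orbit y : Set A)) := by
        unfold spanAxAy
        congr 1
        ext w
        simp [Set.mem_mul, orbit, eq_comm]
    _ = ξ.stableIdealSpan x * ξ.orbit y := by
        simp only [stableIdealSpan, ← Submodule.span_mul_span, Submodule.span_univ,
          Submodule.span_eq]

theorem stableIdealSpan_mul_le_of_spanAxAy_le {p : Submodule k A} (hp : IsIdeal k p) {x y : A}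
    (hxy : spanAxAy k ξ x y ≤ p) : ξ.stableIdealSpan x * ξ.stableIdealSpan y ≤ p := by
  have span_mul_top_le : ξ.stableIdealSpan x * ⊤ ≤ ξ.stableIdealSpan x :=
    (isIdeal_iff_mul_top_le_and_top_mul_le.1 (ξ.isIdeal_stableIdealSpan x)).1
  have mul_top_le : p * ⊤ ≤ p := (isIdeal_iff_mul_top_le_and_top_mul_le.1 hp).1
  calc
    ξ.stableIdealSpan x * ξ.stableIdealSpan y
      = ξ.stableIdealSpan x * ⊤ * ξ.orbit y * ⊤ := by
        change _ * (⊤ * ξ.orbit y * ⊤) = _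
        simp only [mul_assoc]
    _ ≤ ξ.stableIdealSpan x * ξ.orbit y * ⊤ := by gcongr
    _ = spanAxAy k ξ x y * ⊤ := by rw [spanAxAy_eq_stableIdealSpan_mul_orbit]
    _ ≤ p * ⊤ := by gcongr
    _ ≤ p := mul_top_le

theorem spanAxAy_le_mul {I J : Submodule k A} (hI : IsIdeal k I) (hIs : Hstable k ξ I)
    (hJs : Hstable k ξ J) {x y : A} (hx : x ∈ I) (hy : y ∈ J) : spanAxAy k ξ x y ≤ I * J := by
  rw [spanAxAy_eq_stableIdealSpan_mul_orbit]
  exact mul_le_mul' (stableIdealSpan_le hI hIs hx) (hJs.orbit_le hy)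

end PartialModuleAlgebra

theorem isHPrime_iff_forall_spanAxAy_le {p : Submodule k A} (hp : IsIdeal k p)
    (hs : Hstable k ξ p) :
    IsHPrime k ξ p ↔ p ≠ ⊤ ∧ ∀ x y, spanAxAy k ξ x y ≤ p → x ∈ p ∨ y ∈ p := by
  constructor
  · rintro ⟨-, -, hne, hprime⟩
    refine ⟨hne, fun x y hxy ↦ ?_⟩
    have hmul : idealProd k (ξ.stableIdealSpan x) (ξ.stableIdealSpan y) ≤ p := by
      rw [idealProd_eq_mul]
      exact ξ.stableIdealSpan_mul_le_of_spanAxAy_le hp hxy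
    exact (hprime _ _ (ξ.isIdeal_stableIdealSpan x) (ξ.hstable_stableIdealSpan x)
      (ξ.isIdeal_stableIdealSpan y) (ξ.hstable_stableIdealSpan y) hmul).imp
      (fun h ↦ h (ξ.mem_stableIdealSpan_self x)) (fun h ↦ h (ξ.mem_stableIdealSpan_self y))
  · rintro ⟨hne, hspan⟩
    refine ⟨hp, hs, hne, fun I J hI hIs _ hJs hIJ ↦ ?_⟩
    rw [idealProd_eq_mul] at hIJ
    by_contra! hle
    obtain ⟨x, hxI, hxp⟩ := SetLike.not_le_iff_exists.1 hle.1
    obtain ⟨y, hyJ, hyp⟩ := SetLike.not_le_iff_exists.1 hle.2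
    exact (hspan x y ((ξ.spanAxAy_le_mul hI hIs hJs hxI hyJ).trans hIJ)).elim hxp hyp

theorem hmSystem_compl_iff_forall_spanAxAy_le {p : Submodule k A} :
    HmSystem k ξ (p : Set A)ᶜ ↔ p ≠ ⊤ ∧ ∀ x y, spanAxAy k ξ x y ≤ p → x ∈ p ∨ y ∈ p := by
  refine and_congr ?_ (forall_congr' fun x ↦ ?_)
  · rw [Set.nonempty_compl, Ne, Submodule.coe_eq_univ]
  · have hmeet (y : A) : (∃ z ∈ (p : Set A)ᶜ, z ∈ spanAxAy k ξ x y) ↔ ¬spanAxAy k ξ x y ≤ p := by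
      simp only [Set.mem_compl_iff, SetLike.mem_coe, SetLike.not_le_iff_exists, and_comm]
    simp only [hmeet]
    grind [SetLike.mem_coe]

end

/-- A proper `H`-stable ideal `𝔭` is `H`-prime iff its complement is an `Hm`-system. -/
theorem isHPrime_iff_compl_HmSystem (ξ : PartialModuleAlgebra k H A) (p : Submodule k A)
    (hp : IsIdeal k p) (hs : Hstable k ξ p) (hne : p ≠ ⊤) :
    IsHPrime k ξ p ↔ HmSystem k ξ ((p : Set A)ᶜ) := by
  exact (isHPrime_iff_forall_spanAxAy_le hp hs).trans hmSystem_compl_iff_forall_spanAxAy_le.symm
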